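/- For all ordinals α, β < ε₀ and every natural number n, if α →_n β then F^⋄_{ε₀+β}(n) ≤ F^⋄_{ε₀+α}(n). -/

import Mathlib

/-!
The relation `→_n` is generated by single steps `α ↦ {α}(n)`, so it suffices to compare
`F^⋄_{ε₀+α}(n)` with `F^⋄_{ε₀+{α}(n)}(n)`. At a limit `α` the two values are equal by definition.
At a successor `α = β + 1` the first is `f^[n+1](n)` and the second is `f(n)`, where
`f = F^⋄_{ε₀+β}`; the inequality holds because `f` is inflationary (`le_slowF`), which in turn
follows by induction from the same property of the fast-growing hierarchy (`le_fgh`).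

Since `slowF` and `fgh` take the value `0` at a limit whose fundamental sequence fails to descend,
all of this rests on `fundSeq_lt`: `{α}(n) < α` whenever `α ≠ 0`. Its content is that the
supremum `γ` of the exponents `c` with `ω ^ c ∣ α` is attained (`opow_sSup_dvd`) and that the
cofactor `α / ω ^ γ` is a successor, by maximality of `γ`. Both hold for all ordinals, so the
bound by `ε₀` plays no role.
-/

open Ordinal
open scoped Classical

noncomputable section

/-- `omegaTower m α` is `ω_m^α`: the `m`-fold iterated `ω`-power tower on top of `α`. -/
noncomputable def omegaTower : ℕ → Ordinal.{0} → Ordinal.{0}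
  | 0, α => α
  | m + 1, α => omega0 ^ (omegaTower m α)

/-- `ε₀`, the least ordinal `ε` with `ω ^ ε = ε`. -/
noncomputable def eps0 : Ordinal.{0} := Ordinal.nfp (fun a => omega0 ^ a) 0

/-- The fundamental sequence `{α}(n)` for ordinals below `ε₀`:
`{0}(n) = 0`, `{β+1}(n) = β`, and for a limit `α = β + ω^γ·(k+1)` (with `γ > 0` the least
exponent of the Cantor normal form) we set `{α}(n) = β + ω^γ·k + ω^δ·(n+1)` if `γ = δ+1`
and `{α}(n) = β + ω^γ·k + ω^{{γ}(n)}` if `γ` is a limit.  Here `γ` is recovered as the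
largest exponent with `ω^γ ∣ α`, and `β + ω^γ·k = ω^γ · pred (α / ω^γ)`. -/
noncomputable def fundSeq (α : Ordinal.{0}) (n : ℕ) : Ordinal.{0} :=
  if _h0 : α = 0 then 0
  else if hs : ∃ β, α = β + 1 then Classical.choose hs
  else
    let γ : Ordinal := sSup {c : Ordinal | omega0 ^ c ∣ α}
    if hγ : ∃ δ, γ = δ + 1 then
      omega0 ^ γ * Ordinal.pred (α / omega0 ^ γ) +
        omega0 ^ (Classical.choose hγ) * ((n : Ordinal) + 1)
    else if hlt : γ < α then
      omega0 ^ γ * Ordinal.pred (α / omega0 ^ γ) + omega0 ^ (fundSeq γ n)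
    else 0
termination_by α
decreasing_by exact hlt

/-- The step-down relation `β →_n γ`: there is a finite sequence from `β` to `γ`
each step of which descends to the `n`-th member of the fundamental sequence. -/
def stepDown (n : ℕ) (β γ : Ordinal.{0}) : Prop :=
  Relation.ReflTransGen (fun a b => fundSeq a n = b) β γ

/-- The fast-growing hierarchy `F_α` for `α < ε₀`:
`F_0(x) = x+1`, `F_{α+1}(x) = F_α^[x+1](x)`, `F_λ(x) = F_{{λ}(x)}(x)` for limits. -/
noncomputable def fgh (α : Ordinal.{0}) : ℕ → ℕ :=
  if _h0 : α = 0 then fun x => x + 1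
  else if hs : ∃ β, α = β + 1 then fun x => (fgh (Classical.choose hs))^[x + 1] x
  else fun x => if hlt : fundSeq α x < α then fgh (fundSeq α x) x else 0
termination_by α
decreasing_by
  · calc Classical.choose hs < Classical.choose hs + 1 := by
          rw [Ordinal.add_one_eq_succ]; exact Order.lt_succ _
      _ = α := (Classical.choose_spec hs).symm
  · exact hlt

/-- `F_{ε₀}(x) := F_{ω_{x+1}}(x)`. -/
noncomputable def Feps0 (x : ℕ) : ℕ := fgh (omegaTower (x + 1) 1) x

/-- The inverse `F_{ε₀}^{-1}(x) := max({z ≤ x : F_{ε₀}(z) ≤ x} ∪ {0})`. -/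
noncomputable def Feps0Inv (x : ℕ) : ℕ :=
  sSup ({z : ℕ | z ≤ x ∧ Feps0 z ≤ x} ∪ {0})

/-- The slow function `F^⋄_{ε₀}(x) := F_{ω_{F_{ε₀}^{-1}(x)+1}}(x)`. -/
noncomputable def slowFeps0 (x : ℕ) : ℕ := fgh (omegaTower (Feps0Inv x + 1) 1) x

/-- The slow hierarchy `F^⋄_{ε₀+α}` for `α < ε₀`:
`F^⋄_{ε₀+0} = F^⋄_{ε₀}`, `F^⋄_{ε₀+α+1}(n) = (F^⋄_{ε₀+α})^[n+1](n)`, and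
`F^⋄_{ε₀+λ}(n) = F^⋄_{ε₀+{λ}(n)}(n)` for limits `λ`. -/
noncomputable def slowF (α : Ordinal.{0}) : ℕ → ℕ :=
  if _h0 : α = 0 then slowFeps0
  else if hs : ∃ β, α = β + 1 then fun n => (slowF (Classical.choose hs))^[n + 1] n
  else fun n => if hlt : fundSeq α n < α then slowF (fundSeq α n) n else 0
termination_by α
decreasing_by
  · calc Classical.choose hs < Classical.choose hs + 1 := by
          rw [Ordinal.add_one_eq_succ]; exact Order.lt_succ _
      _ = α := (Classical.choose_spec hs).symm
  · exact hlt

/-- A nonempty finite set of naturals is *large* if its cardinality is at least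
its minimum. -/
def IsLargeSet (Y : Finset ℕ) : Prop := ∃ hY : Y.Nonempty, Y.min' hY ≤ Y.card

/-- The Paris–Harrington statement `PH(k, m, n, N)`: every `k`-colouring of the
`n`-element subsets of `{0, …, N-1}` admits a large homogeneous set with at least
`m` elements. -/
def PH (k m n N : ℕ) : Prop :=
  ∀ f : Finset ℕ → Fin k,
    ∃ Y : Finset ℕ, Y ⊆ Finset.range N ∧ m ≤ Y.card ∧ IsLargeSet Y ∧
      ∀ s t : Finset ℕ, s ⊆ Y → t ⊆ Y → s.card = n → t.card = n → f s = f t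

/-- `σ(n, k)`: the least `N` such that every `k`-colouring of the `n`-element subsets of
`{0, …, N-1}` admits a large homogeneous set with at least `n+1` elements. -/
noncomputable def sigmaPH (n k : ℕ) : ℕ := sInf {N | PH k (n + 1) n N}

theorem bddAbove_dvd_exponents {α : Ordinal.{0}} (h0 : α ≠ 0) :
    BddAbove {c : Ordinal.{0} | omega0 ^ c ∣ α} :=
  ⟨α, fun c hc => (right_le_opow c one_lt_omega0).trans (le_of_dvd h0 hc)⟩

/-- The largest `γ` with `ω ^ γ ∣ α` exists. If the supremum `γ` is a limit, the remainder of `α`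
modulo `ω ^ γ` is divisible by all `ω ^ c` with `c < γ`, so it would be at least `ω ^ γ` if it were
nonzero. -/
theorem opow_sSup_dvd {α : Ordinal.{0}} (h0 : α ≠ 0) :
    omega0 ^ sSup {c : Ordinal.{0} | omega0 ^ c ∣ α} ∣ α := by
  have hne : {c : Ordinal.{0} | omega0 ^ c ∣ α}.Nonempty := ⟨0, by simp⟩
  by_cases hl : Order.IsSuccLimit (sSup {c : Ordinal.{0} | omega0 ^ c ∣ α})
  · set γ := sSup {c : Ordinal.{0} | omega0 ^ c ∣ α} with hγ
    have hdvd : ∀ c < γ, omega0 ^ c ∣ α := fun c hc => by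
      obtain ⟨d, hd, hcd⟩ := exists_lt_of_lt_csSup hne hc
      exact (opow_dvd_opow _ hcd.le).trans hd
    apply dvd_of_mod_eq_zero
    by_contra hr
    refine (mod_lt α (opow_pos γ omega0_pos).ne').not_ge ?_
    rw [opow_le_of_isSuccLimit omega0_ne_zero hl]
    intro c hc
    refine le_of_dvd hr ?_
    have h1 : omega0 ^ c ∣ omega0 ^ γ * (α / omega0 ^ γ) :=
      (opow_dvd_opow _ hc.le).trans (dvd_mul_right _ _)
    rw [← dvd_add_iff h1, div_add_mod]
    exact hdvd c hc
  · exact csSup_mem_of_not_isSuccLimit hne (bddAbove_dvd_exponents h0) hl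

/-- A nonzero `α` is `ω ^ γ` times a successor, for the largest `γ` with `ω ^ γ ∣ α`: a cofactor
divisible by `ω` would contradict maximality. -/
theorem opow_sSup_mul_pred_add {α : Ordinal.{0}} (h0 : α ≠ 0) :
    omega0 ^ sSup {c : Ordinal.{0} | omega0 ^ c ∣ α} *
        Ordinal.pred (α / omega0 ^ sSup {c : Ordinal.{0} | omega0 ^ c ∣ α}) +
      omega0 ^ sSup {c : Ordinal.{0} | omega0 ^ c ∣ α} = α := by
  have hdvd := opow_sSup_dvd h0
  have hmax : ∀ c, omega0 ^ c ∣ α → c ≤ sSup {c : Ordinal.{0} | omega0 ^ c ∣ α} :=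
    fun c hc => le_csSup (bddAbove_dvd_exponents h0) hc
  generalize sSup {c : Ordinal.{0} | omega0 ^ c ∣ α} = γ at *
  obtain ⟨q, rfl⟩ := hdvd
  rw [mul_div_cancel _ (opow_pos γ omega0_pos).ne']
  have hq : ¬ Order.IsSuccPrelimit q := by
    intro hq
    obtain ⟨r, rfl⟩ := isSuccPrelimit_iff_omega0_dvd.1 hq
    refine (hmax (γ + 1) ?_).not_gt (lt_add_one γ)
    rw [opow_add, opow_one, ← mul_assoc]
    exact dvd_mul_right _ _
  have h := succ_pred_eq_iff_not_isSuccPrelimit.2 hq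
  rw [← mul_add_one, ← Order.succ_eq_add_one, h]

theorem fundSeq_add_one (β : Ordinal.{0}) (n : ℕ) : fundSeq (β + 1) n = β := by
  have hs : ∃ β', β + 1 = β' + 1 := ⟨β, rfl⟩
  rw [fundSeq, dif_neg (by simp), dif_pos hs]
  simp

/-- Fundamental sequences are strictly descending, for every nonzero ordinal. -/
theorem fundSeq_lt (α : Ordinal.{0}) (n : ℕ) : α ≠ 0 → fundSeq α n < α := by
  induction α using WellFoundedLT.induction with
  | ind α ih =>
  intro h0
  by_cases hs : ∃ β, α = β + 1
  · obtain ⟨β, rfl⟩ := hs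
    rw [fundSeq_add_one]
    exact lt_add_one β
  have key := opow_sSup_mul_pred_add h0
  rw [fundSeq, dif_neg h0, dif_neg hs]
  dsimp only
  split_ifs with hγ hlt
  · conv_rhs => rw [← key]
    rw [add_lt_add_iff_left]
    have hδ := Classical.choose_spec hγ
    refine opow_mul_lt_opow (mod_cast nat_lt_omega0 (n + 1)) ?_
    conv_rhs => rw [hδ]
    exact lt_add_one _
  · have hγ0 : sSup {c : Ordinal.{0} | omega0 ^ c ∣ α} ≠ 0 := by
      intro hz
      -- With exponent `0` the decomposition of `α` displays it as a successor.
      rw [hz, opow_zero] at key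
      exact hs ⟨_, key.symm⟩
    conv_rhs => rw [← key]
    rw [add_lt_add_iff_left, opow_lt_opow_iff_right one_lt_omega0]
    exact ih _ hlt hγ0
  · exact pos_iff_ne_zero.2 h0

theorem fgh_add_one (β : Ordinal.{0}) (n : ℕ) : fgh (β + 1) n = (fgh β)^[n + 1] n := by
  have hs : ∃ β', β + 1 = β' + 1 := ⟨β, rfl⟩
  have hc : Classical.choose hs = β := by simp
  rw [fgh, dif_neg (by simp), dif_pos hs]
  simp only [hc]

theorem fgh_limit {α : Ordinal.{0}} (h0 : α ≠ 0) (hs : ¬ ∃ β, α = β + 1) (n : ℕ) :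
    fgh α n = fgh (fundSeq α n) n := by
  conv_lhs => rw [fgh, dif_neg h0, dif_neg hs]
  exact dif_pos (fundSeq_lt α n h0)

theorem slowF_add_one (β : Ordinal.{0}) (n : ℕ) : slowF (β + 1) n = (slowF β)^[n + 1] n := by
  have hs : ∃ β', β + 1 = β' + 1 := ⟨β, rfl⟩
  have hc : Classical.choose hs = β := by simp
  rw [slowF, dif_neg (by simp), dif_pos hs]
  simp only [hc]

theorem slowF_limit {α : Ordinal.{0}} (h0 : α ≠ 0) (hs : ¬ ∃ β, α = β + 1) (n : ℕ) :
    slowF α n = slowF (fundSeq α n) n := by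
  conv_lhs => rw [slowF, dif_neg h0, dif_neg hs]
  exact dif_pos (fundSeq_lt α n h0)

theorem le_fgh (α : Ordinal.{0}) : ∀ n, n ≤ fgh α n := by
  induction α using WellFoundedLT.induction with
  | ind α ih =>
  intro n
  by_cases h0 : α = 0
  · rw [fgh, dif_pos h0]
    exact Nat.le_succ n
  by_cases hs : ∃ β, α = β + 1
  · obtain ⟨β, rfl⟩ := hs
    rw [fgh_add_one]
    exact Function.id_le_iterate_of_id_le (ih β (lt_add_one β)) (n + 1) n
  · rw [fgh_limit h0 hs]
    exact ih _ (fundSeq_lt α n h0) n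

theorem le_slowF (α : Ordinal.{0}) : ∀ n, n ≤ slowF α n := by
  induction α using WellFoundedLT.induction with
  | ind α ih =>
  intro n
  by_cases h0 : α = 0
  · rw [slowF, dif_pos h0]
    exact le_fgh _ n
  by_cases hs : ∃ β, α = β + 1
  · obtain ⟨β, rfl⟩ := hs
    rw [slowF_add_one]
    exact Function.id_le_iterate_of_id_le (ih β (lt_add_one β)) (n + 1) n
  · rw [slowF_limit h0 hs]
    exact ih _ (fundSeq_lt α n h0) n

/-- The single-step case of the monotonicity of `F^⋄` along `→_n`. -/
theorem slowF_fundSeq_le (α : Ordinal.{0}) (n : ℕ) : slowF (fundSeq α n) n ≤ slowF α n := by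
  by_cases h0 : α = 0
  · subst h0
    rw [fundSeq, dif_pos rfl]
  by_cases hs : ∃ β, α = β + 1
  · obtain ⟨β, rfl⟩ := hs
    rw [fundSeq_add_one, slowF_add_one, Function.iterate_succ_apply]
    exact Function.id_le_iterate_of_id_le (le_slowF β) n _
  · exact (slowF_limit h0 hs n).ge

/-- For all ordinals `α, β < ε₀` and every natural `n`, if `α →_n β` then
`F^⋄_{ε₀+β}(n) ≤ F^⋄_{ε₀+α}(n)`. -/
theorem stmt4 : ∀ α β : Ordinal.{0}, α < eps0 → β < eps0 → ∀ n : ℕ,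
    stepDown n α β → slowF β n ≤ slowF α n := by
  intro α β _ hβ n h
  clear hβ
  induction h with
  | refl => exact le_rfl
  | tail _ hstep ih =>
    subst hstep
    exact (slowF_fundSeq_le _ n).trans ih

end
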